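/- There exists a constant C > 0 such that for every T > 0 and every smooth solution u of the 1-dimensional Schrödinger flow with Neumann boundary conditions on [0,T], for all t ∈ [0,T]: (d/dt) ∫₀¹ |∂_t²u(x,t)|² dx ≤ C ( ‖∂_t u(·,t)‖²_{H¹} + ‖u(·,t)‖²_{H²} + 1 )³ ( ‖∂_t²u(·,t)‖²_{H¹} + 1 ). -/

import Mathlib

open MeasureTheory Set

noncomputable section

abbrev E3 := EuclideanSpace ℝ (Fin 3)

/-- The cross product on `EuclideanSpace ℝ (Fin 3)`. -/
def cross3 (a b : E3) : E3 :=
  (WithLp.equiv 2 (Fin 3 → ℝ)).symm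
    (crossProduct ((WithLp.equiv 2 (Fin 3 → ℝ)) a) ((WithLp.equiv 2 (Fin 3 → ℝ)) b))

/-- Partial derivative in the space variable of `u = u x t`. -/
def pdx (u : ℝ → ℝ → E3) : ℝ → ℝ → E3 := fun x t => deriv (fun y => u y t) x

/-- Partial derivative in the time variable of `u = u x t`. -/
def pdt (u : ℝ → ℝ → E3) : ℝ → ℝ → E3 := fun x t => deriv (fun s => u x s) t

/-- `u` is a smooth solution of the 1-dimensional Schrödinger flow with Neumann
boundary conditions on `[0,1] × [0,T]`. -/
def IsSol (T : ℝ) (u : ℝ → ℝ → E3) : Prop :=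
  ContDiff ℝ (⊤ : ℕ∞) (fun p : ℝ × ℝ => u p.1 p.2) ∧
  (∀ x ∈ Icc (0:ℝ) 1, ∀ t ∈ Icc (0:ℝ) T, ‖u x t‖ = 1) ∧
  (∀ x ∈ Icc (0:ℝ) 1, ∀ t ∈ Icc (0:ℝ) T, pdt u x t = cross3 (u x t) (pdx (pdx u) x t)) ∧
  (∀ t ∈ Icc (0:ℝ) T, pdx u 0 t = 0 ∧ pdx u 1 t = 0)

/-- Squared `L²` norm on `[0,1]`. -/
def L2sq (f : ℝ → E3) : ℝ := ∫ x in (0:ℝ)..1, ‖f x‖ ^ 2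

/-- Squared `H^k` Sobolev norm on `[0,1]`. -/
def Hsq (k : ℕ) (f : ℝ → E3) : ℝ :=
  ∑ j ∈ Finset.range (k + 1), ∫ x in (0:ℝ)..1, ‖deriv^[j] f x‖ ^ 2

open scoped ContDiff
lemma c3_0 (a b : E3) : cross3 a b 0 = a 1 * b 2 - a 2 * b 1 := by
  simp [cross3, crossProduct]
lemma c3_1 (a b : E3) : cross3 a b 1 = a 2 * b 0 - a 0 * b 2 := by
  simp [cross3, crossProduct]
lemma c3_2 (a b : E3) : cross3 a b 2 = a 0 * b 1 - a 1 * b 0 := by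
  simp [cross3, crossProduct]
lemma inner3 (a b : E3) : inner ℝ a b = a 0 * b 0 + a 1 * b 1 + a 2 * b 2 := by
  simp [PiLp.inner_apply, Fin.sum_univ_three]; ring
lemma nsq3 (a : E3) : ‖a‖ ^ 2 = a 0 * a 0 + a 1 * a 1 + a 2 * a 2 := by
  rw [← real_inner_self_eq_norm_sq, inner3]
lemma ext3 (a b : E3) (h0 : a 0 = b 0) (h1 : a 1 = b 1) (h2 : a 2 = b 2) : a = b := by
  ext i; fin_cases i <;> assumption
lemma norm_cross3_le (a b : E3) : ‖cross3 a b‖ ≤ ‖a‖ * ‖b‖ := by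
  apply le_of_sq_le_sq _ (by positivity)
  rw [mul_pow, nsq3, nsq3, nsq3, c3_0, c3_1, c3_2]
  nlinarith [sq_nonneg (a 0 * b 0 + a 1 * b 1 + a 2 * b 2)]

lemma bil_cross3 : IsBoundedBilinearMap ℝ (fun p : E3 × E3 => cross3 p.1 p.2) where
  add_left a b c := by apply ext3 <;> simp [c3_0, c3_1, c3_2] <;> ring
  smul_left r a b := by apply ext3 <;> simp [c3_0, c3_1, c3_2] <;> ring
  add_right a b c := by apply ext3 <;> simp [c3_0, c3_1, c3_2] <;> ring
  smul_right r a b := by apply ext3 <;> simp [c3_0, c3_1, c3_2] <;> ring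
  bound := ⟨1, one_pos, fun a b => by simpa using norm_cross3_le a b⟩

lemma hasDerivAt_cross3 {f g : ℝ → E3} {f' g' : E3} {x : ℝ} (hf : HasDerivAt f f' x)
    (hg : HasDerivAt g g' x) :
    HasDerivAt (fun y => cross3 (f y) (g y)) (cross3 f' (g x) + cross3 (f x) g') x := by
  have h := (bil_cross3.hasFDerivAt (f x, g x)).comp_hasDerivAt x (hf.prodMk hg)
  refine h.congr_deriv ?_
  change cross3 (f x) g' + cross3 f' (g x) = _
  exact add_comm _ _

/-- joint smoothness -/
def Sm (u : ℝ → ℝ → E3) : Prop := ContDiff ℝ (⊤ : ℕ∞) (fun p : ℝ × ℝ => u p.1 p.2)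

lemma Sm.hx {u : ℝ → ℝ → E3} (h : Sm u) (x t : ℝ) :
    HasDerivAt (fun y => u y t) (fderiv ℝ (fun p : ℝ × ℝ => u p.1 p.2) (x,t) (1,0)) x := by
  have h1 := ((h.differentiable (by simp)) (x,t)).hasFDerivAt
  exact h1.comp_hasDerivAt (f := fun y : ℝ => (y, t)) x ((hasDerivAt_id x).prodMk (hasDerivAt_const x t))

lemma Sm.ht {u : ℝ → ℝ → E3} (h : Sm u) (x t : ℝ) :
    HasDerivAt (fun s => u x s) (fderiv ℝ (fun p : ℝ × ℝ => u p.1 p.2) (x,t) (0,1)) t := by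
  have h1 := ((h.differentiable (by simp)) (x,t)).hasFDerivAt
  exact h1.comp_hasDerivAt (f := fun s : ℝ => (x, s)) t ((hasDerivAt_const t x).prodMk (hasDerivAt_id t))

lemma Sm.dx {u : ℝ → ℝ → E3} (h : Sm u) (x t : ℝ) : HasDerivAt (fun y => u y t) (pdx u x t) x :=
  (h.hx x t).differentiableAt.hasDerivAt
lemma Sm.dt {u : ℝ → ℝ → E3} (h : Sm u) (x t : ℝ) : HasDerivAt (fun s => u x s) (pdt u x t) t :=
  (h.ht x t).differentiableAt.hasDerivAt

lemma Sm.pdx_eq {u : ℝ → ℝ → E3} (h : Sm u) :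
    (fun p : ℝ × ℝ => pdx u p.1 p.2) = fun p => fderiv ℝ (fun p : ℝ × ℝ => u p.1 p.2) p (1,0) := by
  funext p; exact (h.hx p.1 p.2).deriv
lemma Sm.pdt_eq {u : ℝ → ℝ → E3} (h : Sm u) :
    (fun p : ℝ × ℝ => pdt u p.1 p.2) = fun p => fderiv ℝ (fun p : ℝ × ℝ => u p.1 p.2) p (0,1) := by
  funext p; exact (h.ht p.1 p.2).deriv

lemma Sm.pdx {u : ℝ → ℝ → E3} (h : Sm u) : Sm (pdx u) := by
  unfold Sm; rw [h.pdx_eq]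
  exact (h.fderiv_right (m := (⊤ : ℕ∞)) (by simp)).clm_apply contDiff_const
lemma Sm.pdt {u : ℝ → ℝ → E3} (h : Sm u) : Sm (pdt u) := by
  unfold Sm; rw [h.pdt_eq]
  exact (h.fderiv_right (m := (⊤ : ℕ∞)) (by simp)).clm_apply contDiff_const

lemma Sm.comm {u : ℝ → ℝ → E3} (h : Sm u) : _root_.pdx (_root_.pdt u) = _root_.pdt (_root_.pdx u) := by
  funext x t
  have hd : Differentiable ℝ (fderiv ℝ (fun p : ℝ × ℝ => u p.1 p.2)) :=
    (h.fderiv_right (m := (⊤ : ℕ∞)) (by simp)).differentiable (by simp)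
  have e1 := (h.pdt.hx x t).deriv
  have e2 := (h.pdx.ht x t).deriv
  rw [h.pdt_eq] at e1
  rw [h.pdx_eq] at e2
  have hs : IsSymmSndFDerivAt ℝ (fun p : ℝ × ℝ => u p.1 p.2) (x,t) :=
    (h.contDiffAt).isSymmSndFDerivAt (by simp; exact WithTop.coe_le_coe.2 (le_top : (2 : ℕ∞) ≤ ⊤))
  rw [fderiv_clm_apply hd.differentiableAt (by fun_prop)] at e1 e2
  simp at e1 e2
  exact e1.trans ((hs _ _).trans e2.symm)

lemma Sm.cx {u : ℝ → ℝ → E3} (h : Sm u) (t : ℝ) : Continuous (fun x => u x t) := by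
  have := h.continuous
  exact this.comp (f := fun x => (x,t)) (by fun_prop)

lemma deriv_eq_on {a b : ℝ} (hab : a < b) {F : Type*} [NormedAddCommGroup F] [NormedSpace ℝ F]
    {f g : ℝ → F} {f' g' : F} {x : ℝ} (hx : x ∈ Icc a b)
    (h : ∀ y ∈ Icc a b, f y = g y) (hf : HasDerivAt f f' x) (hg : HasDerivAt g g' x) : f' = g' := by
  have u := (uniqueDiffOn_Icc hab) x hx
  exact u.eq_deriv _ hf.hasDerivWithinAt ((hg.hasDerivWithinAt).congr h (h x hx))

lemma sobolev {f f' : ℝ → E3} (hf : ∀ x, HasDerivAt f (f' x) x) (hc : Continuous f')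
    {x : ℝ} (hx : x ∈ Icc (0:ℝ) 1) :
    ‖f x‖ ^ 2 ≤ 2 * ((∫ y in (0:ℝ)..1, ‖f y‖ ^ 2) + ∫ y in (0:ℝ)..1, ‖f' y‖ ^ 2) := by
  have hfc : Continuous f := continuous_iff_continuousAt.2 fun x => (hf x).continuousAt
  obtain ⟨y, hy, hmin⟩ := isCompact_Icc.exists_isMinOn (⟨0, by simp⟩ : (Icc (0:ℝ) 1).Nonempty)
    (f := fun z => ‖f z‖ ^ 2) (by fun_prop)
  have h1 : ‖f y‖ ^ 2 ≤ ∫ y in (0:ℝ)..1, ‖f y‖ ^ 2 := by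
    have := intervalIntegral.integral_mono_on (f := fun _ => ‖f y‖ ^ 2) (g := fun z => ‖f z‖ ^ 2)
      (μ := volume) (zero_le_one (α := ℝ)) (by simp) (Continuous.intervalIntegrable (by fun_prop) _ _)
      (fun z hz => hmin hz)
    simpa using this
  have hd : ∀ z, HasDerivAt (fun z => ‖f z‖ ^ 2) (2 * inner ℝ (f z) (f' z)) z :=
    fun z => (hf z).norm_sq
  have h2 : ∫ z in y..x, 2 * inner ℝ (f z) (f' z) = ‖f x‖ ^ 2 - ‖f y‖ ^ 2 :=
    intervalIntegral.integral_eq_sub_of_hasDerivAt (fun z _ => hd z)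
      (Continuous.intervalIntegrable (by fun_prop) _ _)
  have h3 : ‖∫ z in y..x, 2 * inner ℝ (f z) (f' z)‖ ≤ ∫ z in (0:ℝ)..1, (‖f z‖ ^ 2 + ‖f' z‖ ^ 2) := by
    have hb : ∀ z, ‖2 * inner ℝ (f z) (f' z)‖ ≤ ‖f z‖ ^ 2 + ‖f' z‖ ^ 2 := by
      intro z
      have := norm_inner_le_norm (𝕜 := ℝ) (f z) (f' z)
      rw [norm_mul]; simp only [Real.norm_ofNat]
      nlinarith [sq_nonneg (‖f z‖ - ‖f' z‖)]
    rw [intervalIntegral.integral_of_le zero_le_one]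
    refine (intervalIntegral.norm_integral_le_integral_norm_uIoc).trans ?_
    have hi : IntegrableOn (fun z => ‖f z‖ ^ 2 + ‖f' z‖ ^ 2) (Ioc 0 1) :=
      (Continuous.integrableOn_Icc (by fun_prop)).mono_set Ioc_subset_Icc_self
    have hsub : uIoc y x ⊆ Ioc 0 1 := by
      intro z hz
      rw [uIoc, mem_Ioc] at hz
      exact ⟨lt_of_le_of_lt (le_min hy.1 hx.1) hz.1, hz.2.trans (max_le hy.2 hx.2)⟩
    refine le_trans (setIntegral_mono (Integrable.mono' (hi.mono_set hsub)
      (Continuous.aestronglyMeasurable (by fun_prop)) (ae_of_all _ fun z => by simpa using hb z))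
      (hi.mono_set hsub) hb) ?_
    exact setIntegral_mono_set hi (ae_of_all _ fun z => by positivity) hsub.eventuallyLE
  rw [h2, intervalIntegral.integral_add (Continuous.intervalIntegrable (by fun_prop) _ _)
    (Continuous.intervalIntegrable (by fun_prop) _ _)] at h3
  have h4 : 0 ≤ ∫ y in (0:ℝ)..1, ‖f' y‖ ^ 2 :=
    intervalIntegral.integral_nonneg zero_le_one fun z _ => by positivity
  have := le_abs_self (‖f x‖ ^ 2 - ‖f y‖ ^ 2)
  rw [Real.norm_eq_abs] at h3
  linarith

lemma deriv_under {w : ℝ → ℝ → E3} (hw : Sm w) (t : ℝ) :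
    HasDerivAt (fun s => ∫ x in (0:ℝ)..1, ‖w x s‖ ^ 2)
      (∫ x in (0:ℝ)..1, 2 * inner ℝ (w x t) (pdt w x t)) t := by
  have c1 := hw.continuous
  have c2 := hw.pdt.continuous
  have cF : Continuous (fun p : ℝ × ℝ => 2 * inner ℝ (w p.1 p.2) (pdt w p.1 p.2)) := by fun_prop
  obtain ⟨B, hB⟩ := (isCompact_Icc (a := (0:ℝ)) (b := 1)).prod
    (isCompact_Icc (a := t - 1) (b := t + 1)) |>.exists_bound_of_continuousOn cF.continuousOn
  refine (intervalIntegral.hasDerivAt_integral_of_dominated_loc_of_deriv_le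
    (F := fun s x => ‖w x s‖ ^ 2) (F' := fun s x => 2 * inner ℝ (w x s) (pdt w x s))
    (s := Icc (t-1) (t+1)) (bound := fun _ => B) (Icc_mem_nhds (by linarith) (by linarith))
    ?_ ?_ ?_ ?_ (by simp) ?_).2
  · refine Filter.Eventually.of_forall fun s => Continuous.aestronglyMeasurable ?_
    have := hw.cx s
    fun_prop
  · have := hw.cx t
    exact Continuous.intervalIntegrable (by fun_prop) _ _
  · have := hw.cx t
    have := hw.pdt.cx t
    exact Continuous.aestronglyMeasurable (by fun_prop)
  · refine ae_of_all _ fun x hx s hs => hB (x, s) ⟨?_, hs⟩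
    rw [uIoc_of_le zero_le_one] at hx
    exact Ioc_subset_Icc_self hx
  · exact ae_of_all _ fun x hx s hs => (hw.dt x s).norm_sq

lemma vec_bound {u v ux vx uxx vxx w : E3} (h1 : ‖u‖ = 1)
    (hw : w = cross3 v uxx + cross3 u vxx)
    (hi : inner ℝ u vxx = -(2 * inner ℝ ux vx + inner ℝ uxx v)) :
    ‖vxx‖ ≤ ‖w‖ + 2 * (‖v‖ * ‖uxx‖) + 2 * (‖ux‖ * ‖vx‖) := by
  have hu2 : u 0 * u 0 + u 1 * u 1 + u 2 * u 2 = 1 := by rw [← nsq3, h1]; norm_num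
  have e : vxx = (inner ℝ u vxx) • u - cross3 u (cross3 u vxx) := by
    rw [inner3]
    apply ext3 <;> simp [c3_0, c3_1, c3_2]
    · linear_combination (-vxx 0) * hu2
    · linear_combination (-vxx 1) * hu2
    · linear_combination (-vxx 2) * hu2
  have hc : cross3 u vxx = w - cross3 v uxx := by rw [hw]; abel
  have n1 : ‖vxx‖ ≤ |inner ℝ u vxx| + ‖cross3 u vxx‖ := by
    have a1 := norm_sub_le ((inner ℝ u vxx) • u) (cross3 u (cross3 u vxx))
    rw [← e, norm_smul, h1] at a1
    have a2 := norm_cross3_le u (cross3 u vxx)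
    rw [h1] at a2
    simp only [Real.norm_eq_abs] at a1
    linarith
  have n2 : ‖cross3 u vxx‖ ≤ ‖w‖ + ‖v‖ * ‖uxx‖ := by
    rw [hc]; exact (norm_sub_le _ _).trans (by gcongr; exact norm_cross3_le _ _)
  have n3 : |inner ℝ u vxx| ≤ 2 * (‖ux‖ * ‖vx‖) + ‖v‖ * ‖uxx‖ := by
    rw [hi, abs_neg]
    have b1 := abs_le.1 (abs_real_inner_le_norm ux vx)
    have b2 := abs_le.1 (abs_real_inner_le_norm uxx v)
    rw [abs_le]; constructor <;> nlinarith
  linarith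

lemma vec_est {u v ux vx uxx vxx w wx wxx wt : E3} {K : ℝ} (hK : 1 ≤ K) (h1 : ‖u‖ = 1)
    (hw : w = cross3 v uxx + cross3 u vxx)
    (hwt : wt = (cross3 w uxx + cross3 v vxx) + (cross3 v vxx + cross3 u wxx))
    (hi : inner ℝ u vxx = -(2 * inner ℝ ux vx + inner ℝ uxx v))
    (hv : ‖v‖ ^ 2 ≤ K) (hux : ‖ux‖ ^ 2 ≤ K) :
    2 * inner ℝ w wt - 2 * (inner ℝ w (cross3 ux wx + cross3 u wxx) + inner ℝ wx (cross3 u wx))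
      ≤ K * (13 * ‖w‖ ^ 2 + 4 * ‖uxx‖ ^ 2 + 4 * ‖vx‖ ^ 2 + ‖wx‖ ^ 2) := by
  have hb := vec_bound h1 hw hi
  have e : 2 * inner ℝ w wt
      - 2 * (inner ℝ w (cross3 ux wx + cross3 u wxx) + inner ℝ wx (cross3 u wx))
      = 4 * inner ℝ w (cross3 v vxx) - 2 * inner ℝ w (cross3 ux wx) := by
    rw [hwt]
    simp only [inner3, PiLp.add_apply, c3_0, c3_1, c3_2]
    ring
  have i1 : inner ℝ w (cross3 v vxx) ≤ ‖w‖ * (‖v‖ * ‖vxx‖) :=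
    (real_inner_le_norm _ _).trans (by gcongr; exact norm_cross3_le _ _)
  have i2 : -inner ℝ w (cross3 ux wx) ≤ ‖w‖ * (‖ux‖ * ‖wx‖) :=
    (neg_le_abs _).trans ((abs_real_inner_le_norm _ _).trans (by gcongr; exact norm_cross3_le _ _))
  have vK : ‖v‖ ≤ K := by nlinarith [norm_nonneg v]
  have uK : ‖ux‖ ≤ K := by nlinarith [norm_nonneg ux]
  have uvK : ‖v‖ * ‖ux‖ ≤ K := by nlinarith [sq_nonneg (‖v‖ - ‖ux‖)]
  have t1 : ‖w‖ * (‖v‖ * ‖vxx‖) ≤ K * ‖w‖ ^ 2 + 2 * K * (‖w‖ * ‖uxx‖) + 2 * K * (‖w‖ * ‖vx‖) := by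
    calc ‖w‖ * (‖v‖ * ‖vxx‖)
        ≤ ‖w‖ * (‖v‖ * (‖w‖ + 2 * (‖v‖ * ‖uxx‖) + 2 * (‖ux‖ * ‖vx‖))) := by gcongr
      _ = ‖v‖ * ‖w‖ ^ 2 + 2 * ‖v‖ ^ 2 * (‖w‖ * ‖uxx‖) + 2 * (‖v‖ * ‖ux‖) * (‖w‖ * ‖vx‖) := by ring
      _ ≤ _ := by gcongr
  have t2 : ‖w‖ * (‖ux‖ * ‖wx‖) ≤ K * (‖w‖ * ‖wx‖) := by
    calc _ = ‖ux‖ * (‖w‖ * ‖wx‖) := by ring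
      _ ≤ _ := by gcongr
  have y1 : K * (2 * (‖w‖ * ‖uxx‖)) ≤ K * (‖w‖ ^ 2 + ‖uxx‖ ^ 2) := by
    gcongr; nlinarith [sq_nonneg (‖w‖ - ‖uxx‖)]
  have y2 : K * (2 * (‖w‖ * ‖vx‖)) ≤ K * (‖w‖ ^ 2 + ‖vx‖ ^ 2) := by
    gcongr; nlinarith [sq_nonneg (‖w‖ - ‖vx‖)]
  have y3 : K * (2 * (‖w‖ * ‖wx‖)) ≤ K * (‖w‖ ^ 2 + ‖wx‖ ^ 2) := by
    gcongr; nlinarith [sq_nonneg (‖w‖ - ‖wx‖)]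
  rw [e]
  linarith

theorem utt_differential_inequality_schrodinger_flow :
    ∃ C > (0:ℝ), ∀ T > (0:ℝ), ∀ u : ℝ → ℝ → E3, IsSol T u →
      ∀ t ∈ Icc (0:ℝ) T,
        deriv (fun s => ∫ x in (0:ℝ)..1, ‖pdt (pdt u) x s‖ ^ 2) t
          ≤ C * (Hsq 1 (fun x => pdt u x t) + Hsq 2 (fun x => u x t) + 1) ^ 3
            * (Hsq 1 (fun x => pdt (pdt u) x t) + 1) := by
  refine ⟨34, by norm_num, ?_⟩
  intro T hT u ⟨hu0, hn, heq, hbd⟩ t ht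
  have hu : Sm u := hu0
  have hv := hu.pdt
  have hw := hv.pdt
  rw [(deriv_under hw t).deriv]
  have c2 : pdt (pdx (pdx u)) = pdx (pdx (pdt u)) := by
    rw [← hu.pdx.comm, hu.comm]
  have c3 : pdt (pdx (pdx (pdt u))) = pdx (pdx (pdt (pdt u))) := by
    rw [← hv.pdx.comm, hv.comm]
  have E1 : ∀ x ∈ Icc (0:ℝ) 1, ∀ t ∈ Icc (0:ℝ) T, pdt (pdt u) x t =
      cross3 (pdt u x t) (pdx (pdx u) x t) + cross3 (u x t) (pdx (pdx (pdt u)) x t) := by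
    intro x hx t ht
    rw [← c2]
    exact deriv_eq_on hT ht (heq x hx) (hv.dt x t)
      (hasDerivAt_cross3 (hu.dt x t) (hu.pdx.pdx.dt x t))
  have E2 : ∀ x ∈ Icc (0:ℝ) 1, ∀ t ∈ Icc (0:ℝ) T, pdt (pdt (pdt u)) x t =
      (cross3 (pdt (pdt u) x t) (pdx (pdx u) x t) + cross3 (pdt u x t) (pdx (pdx (pdt u)) x t)) +
      (cross3 (pdt u x t) (pdx (pdx (pdt u)) x t)
        + cross3 (u x t) (pdx (pdx (pdt (pdt u))) x t)) := by
    intro x hx t ht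
    rw [← c3]
    have := deriv_eq_on hT ht (E1 x hx) (hw.dt x t)
      ((hasDerivAt_cross3 (hv.dt x t) (hu.pdx.pdx.dt x t)).add
      (hasDerivAt_cross3 (hu.dt x t) (hv.pdx.pdx.dt x t)))
    rw [c2] at this
    exact this
  have O0 : ∀ x ∈ Icc (0:ℝ) 1, inner ℝ (u x t) (pdt u x t) = 0 := by
    intro x hx
    rw [heq x hx t ht, inner3, c3_0, c3_1, c3_2]; ring
  have O1 : ∀ x ∈ Icc (0:ℝ) 1,
      inner ℝ (u x t) (pdx (pdt u) x t) + inner ℝ (pdx u x t) (pdt u x t) = 0 := by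
    intro x hx
    exact deriv_eq_on one_pos hx O0 ((hu.dx x t).inner ℝ (hv.dx x t)) (hasDerivAt_const x 0)
  have O2 : ∀ x ∈ Icc (0:ℝ) 1, inner ℝ (u x t) (pdx (pdx (pdt u)) x t) =
      -(2 * inner ℝ (pdx u x t) (pdx (pdt u) x t) + inner ℝ (pdx (pdx u) x t) (pdt u x t)) := by
    intro x hx
    have := deriv_eq_on one_pos hx O1 (((hu.dx x t).inner ℝ (hv.pdx.dx x t)).add
      ((hu.pdx.dx x t).inner ℝ (hv.dx x t))) (hasDerivAt_const x 0)
    linarith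
  have bz : ∀ x : ℝ, (∀ t ∈ Icc (0:ℝ) T, pdx u x t = 0) → pdx (pdt (pdt u)) x t = 0 := by
    intro x h
    rw [hv.comm, hu.comm]
    have h1 : ∀ t ∈ Icc (0:ℝ) T, pdt (pdx u) x t = 0 := fun t ht =>
      deriv_eq_on hT ht h (hu.pdx.dt x t) (hasDerivAt_const t 0)
    exact deriv_eq_on hT ht h1 (hu.pdx.pdt.dt x t) (hasDerivAt_const t 0)
  have b0 := bz 0 fun t ht => (hbd t ht).1
  have b1 := bz 1 fun t ht => (hbd t ht).2
  -- continuity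
  have k0 := hu.cx t
  have k1 := hu.pdx.cx t
  have k2 := hu.pdx.pdx.cx t
  have k3 := hv.cx t
  have k4 := hv.pdx.cx t
  have k5 := hw.cx t
  have k6 := hw.pdx.cx t
  have k7 := hw.pdt.cx t
  have k8 := hw.pdx.pdx.cx t
  have kc : ∀ f g : ℝ → E3, Continuous f → Continuous g → Continuous fun x => cross3 (f x) (g x) :=
    fun f g hf hg => bil_cross3.continuous.comp (hf.prodMk hg)
  have k9 := kc _ _ k1 k6
  have k10 := kc _ _ k0 k8
  have k11 := kc _ _ k0 k6
  have hφ : ∀ x, HasDerivAt (fun x => inner ℝ (pdt (pdt u) x t)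
      (cross3 (u x t) (pdx (pdt (pdt u)) x t)))
      (inner ℝ (pdt (pdt u) x t) (cross3 (pdx u x t) (pdx (pdt (pdt u)) x t)
        + cross3 (u x t) (pdx (pdx (pdt (pdt u))) x t))
        + inner ℝ (pdx (pdt (pdt u)) x t) (cross3 (u x t) (pdx (pdt (pdt u)) x t))) x :=
    fun x => (hw.dx x t).inner ℝ (hasDerivAt_cross3 (hu.dx x t) (hw.pdx.dx x t))
  have hIφ := intervalIntegral.integral_eq_sub_of_hasDerivAt (a := 0) (b := 1) (fun x _ => hφ x)
    (Continuous.intervalIntegrable (by fun_prop) _ _)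
  have z : ∀ a : E3, cross3 a 0 = 0 := fun a => by apply ext3 <;> simp [c3_0, c3_1, c3_2]
  simp only [b0, b1, z, inner_zero_right, sub_zero] at hIφ
  -- norms
  have nn : ∀ f : ℝ → E3, 0 ≤ ∫ x in (0:ℝ)..1, ‖f x‖ ^ 2 := fun f =>
    intervalIntegral.integral_nonneg zero_le_one fun z _ => by positivity
  have H1 : ∀ f : ℝ → ℝ → E3, Hsq 1 (fun x => f x t) =
      (∫ x in (0:ℝ)..1, ‖f x t‖ ^ 2) + ∫ x in (0:ℝ)..1, ‖pdx f x t‖ ^ 2 := by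
    intro f; simp [Hsq, Finset.sum_range_succ]; rfl
  have H2 : Hsq 2 (fun x => u x t) = (∫ x in (0:ℝ)..1, ‖u x t‖ ^ 2)
      + (∫ x in (0:ℝ)..1, ‖pdx u x t‖ ^ 2) + ∫ x in (0:ℝ)..1, ‖pdx (pdx u) x t‖ ^ 2 := by
    simp [Hsq, Finset.sum_range_succ]; rfl
  rw [H1, H1, H2]
  have Sv : ∀ x ∈ Icc (0:ℝ) 1, _ := fun x hx => sobolev (fun x => hv.dx x t) k4 hx
  have Su : ∀ x ∈ Icc (0:ℝ) 1, _ := fun x hx => sobolev (fun x => hu.pdx.dx x t) k2 hx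
  have n1 := nn fun x => u x t
  have n2 := nn fun x => pdx u x t
  have n3 := nn fun x => pdx (pdx u) x t
  have n4 := nn fun x => pdt u x t
  have n5 := nn fun x => pdx (pdt u) x t
  have n6 := nn fun x => pdt (pdt u) x t
  have n7 := nn fun x => pdx (pdt (pdt u)) x t
  set X := (∫ x in (0:ℝ)..1, ‖pdt u x t‖ ^ 2) + (∫ x in (0:ℝ)..1, ‖pdx (pdt u) x t‖ ^ 2)
    + ((∫ x in (0:ℝ)..1, ‖u x t‖ ^ 2)
      + (∫ x in (0:ℝ)..1, ‖pdx u x t‖ ^ 2) + ∫ x in (0:ℝ)..1, ‖pdx (pdx u) x t‖ ^ 2) + 1 with hX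
  have hX1 : 1 ≤ X := by linarith
  have hle : (∫ x in (0:ℝ)..1, 2 * inner ℝ (pdt (pdt u) x t) (pdt (pdt (pdt u)) x t)) ≤
      ∫ x in (0:ℝ)..1, (2 * X) * (13 * ‖pdt (pdt u) x t‖ ^ 2 + 4 * ‖pdx (pdx u) x t‖ ^ 2
        + 4 * ‖pdx (pdt u) x t‖ ^ 2 + ‖pdx (pdt (pdt u)) x t‖ ^ 2) := by
    have := intervalIntegral.integral_mono_on (μ := volume) (zero_le_one (α := ℝ))
      (Continuous.intervalIntegrable (by fun_prop) _ _)
      (Continuous.intervalIntegrable (by fun_prop) _ _)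
      (fun x hx => vec_est (K := 2 * X) (by linarith) (hn x hx t ht) (E1 x hx t ht) (E2 x hx t ht)
        (O2 x hx) (by linarith [Sv x hx]) (by linarith [Su x hx])
        (wx := pdx (pdt (pdt u)) x t))
    rw [intervalIntegral.integral_sub (Continuous.intervalIntegrable (by fun_prop) _ _)
      (Continuous.intervalIntegrable (by fun_prop) _ _),
      intervalIntegral.integral_const_mul 2 (fun x => _ + _), hIφ] at this
    linarith
  refine hle.trans ?_
  have ii : ∀ (c : ℝ) (f : ℝ → E3), Continuous f →
      IntervalIntegrable (fun x => c * ‖f x‖ ^ 2) volume 0 1 :=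
    fun c f hf => Continuous.intervalIntegrable (by fun_prop) _ _
  rw [intervalIntegral.integral_const_mul,
    intervalIntegral.integral_add (Continuous.intervalIntegrable (by fun_prop) _ _)
      (Continuous.intervalIntegrable (by fun_prop) _ _),
    intervalIntegral.integral_add (Continuous.intervalIntegrable (by fun_prop) _ _) (ii _ _ k4),
    intervalIntegral.integral_add (ii _ _ k5) (ii _ _ k2),
    intervalIntegral.integral_const_mul, intervalIntegral.integral_const_mul,
    intervalIntegral.integral_const_mul]
  set W := (∫ x in (0:ℝ)..1, ‖pdt (pdt u) x t‖ ^ 2)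
    + ∫ x in (0:ℝ)..1, ‖pdx (pdt (pdt u)) x t‖ ^ 2 with hW
  have hW0 : 0 ≤ W := by linarith
  have s1 : 13 * (∫ x in (0:ℝ)..1, ‖pdt (pdt u) x t‖ ^ 2)
      + 4 * (∫ x in (0:ℝ)..1, ‖pdx (pdx u) x t‖ ^ 2)
      + 4 * (∫ x in (0:ℝ)..1, ‖pdx (pdt u) x t‖ ^ 2)
      + (∫ x in (0:ℝ)..1, ‖pdx (pdt (pdt u)) x t‖ ^ 2) ≤ 17 * (X * (W + 1)) := by
    nlinarith
  calc _ ≤ 2 * X * (17 * (X * (W + 1))) := by gcongr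
    _ = 34 * X ^ 2 * (W + 1) := by ring
    _ ≤ 34 * X ^ 3 * (W + 1) := by gcongr; norm_num

end
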